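/- With u : ℕ₀ → K defined by the digit construction: (a) u(n) = 0 if and only if n = 0, and for every integer k ≥ 1, |u(n)| = q^k if and only if q^{k−1} ≤ n < q^k; (b) {u(n) : n ∈ ℕ₀} = {−u(n) : n ∈ ℕ₀}; (c) for each fixed m ∈ ℕ₀, {u(m) + u(n) : n ∈ ℕ₀} = {u(n) : n ∈ ℕ₀}. Consequently {u(n) : n ∈ ℕ₀} is a subgroup of K⁺. -/

import Mathlib

open Complex Set Filter Topology

noncomputable section

/-- A local field of positive characteristic, with its standard data:
the absolute value (the norm), a prime element `π`, residue field of cardinality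
`q = p ^ c`, the normalized Haar measure `μ`, and the fixed character `χ`
(trivial on the ring of integers `{x | ‖x‖ ≤ 1}`, nontrivial on `π⁻¹𝔇`). -/
structure LFPCBase where
  K : Type
  [instNorm : NormedField K]
  [instMeas : MeasurableSpace K]
  [instBorel : BorelSpace K]
  locallyCompact : LocallyCompactSpace K
  complete : CompleteSpace K
  nondiscrete : ∃ x : K, x ≠ 0 ∧ ‖x‖ ≠ 1
  totallyDisconnected : TotallyDisconnectedSpace K
  p : ℕ
  hp : p.Prime
  charP : CharP K p
  ultrametric : ∀ x y : K, ‖x + y‖ ≤ max ‖x‖ ‖y‖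
  c : ℕ
  hc : 0 < c
  q : ℕ
  hq : q = p ^ c
  valuation_range : ∀ x : K, x ≠ 0 → ∃ s : ℤ, ‖x‖ = (q : ℝ) ^ s
  π : K
  hπ : ‖π‖ = (q : ℝ)⁻¹
  μ : MeasureTheory.Measure K
  μ_left_invariant : μ.IsAddLeftInvariant
  μ_D : μ {x : K | ‖x‖ ≤ 1} = 1
  μ_scale : ∀ a : K, a ≠ 0 → ∀ s : Set K,
    μ ((fun x => a * x) '' s) = ENNReal.ofReal ‖a‖ * μ s
  χ : K → ℂ
  χ_add : ∀ x y : K, χ (x + y) = χ x * χ y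
  χ_unitary : ∀ x : K, ‖χ x‖ = 1
  χ_continuous : Continuous χ
  χ_trivial : ∀ x : K, ‖x‖ ≤ 1 → χ x = 1
  χ_nontrivial : ∃ x : K, ‖x‖ ≤ (q : ℝ) ∧ χ x ≠ 1

attribute [instance] LFPCBase.instNorm LFPCBase.instMeas LFPCBase.instBorel

open MeasureTheory

namespace LFPCBase

variable (C : LFPCBase)

/-- The ring of integers `𝔇 = {x : K | ‖x‖ ≤ 1}`. -/
def D : Set C.K := {x : C.K | ‖x‖ ≤ 1}

end LFPCBase

theorem digits_exist (p : ℕ) (hp : 0 < p) (c : ℕ) : ∀ a : ℕ → ℕ, (∀ k, k < c → a k < p) →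
    ∃ n, n < p ^ c ∧ ∀ k, k < c → n / p ^ k % p = a k := by
  induction c with
  | zero => intro a _; exact ⟨0, by simp, by simp⟩
  | succ c ih =>
    intro a ha
    obtain ⟨n, hn, hd⟩ := ih (fun k => a (k + 1)) (fun k hk => ha (k + 1) (by omega))
    have h0 := ha 0 (by omega)
    refine ⟨a 0 + p * n, ?_, ?_⟩
    · rw [pow_succ']
      calc a 0 + p * n < p + p * n := by omega
        _ = p * (n + 1) := by ring
        _ ≤ p * p ^ c := Nat.mul_le_mul_left _ hn
    · intro k hk
      cases k with
      | zero => simp [Nat.mod_eq_of_lt h0]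
      | succ k =>
        rw [pow_succ', ← Nat.div_div_eq_div_mul, Nat.add_mul_div_left _ _ hp,
          Nat.div_eq_of_lt h0, zero_add]
        exact hd k (by omega)

theorem all_digits_zero (p : ℕ) (c : ℕ) : ∀ n, n < p ^ c →
    (∀ k, k < c → n / p ^ k % p = 0) → n = 0 := by
  induction c with
  | zero => intro n hn _; simpa using hn
  | succ c ih =>
    intro n hn h
    have h0 := h 0 (by omega)
    have h1 : n / p = 0 := by
      apply ih
      · apply Nat.div_lt_of_lt_mul
        rwa [← pow_succ']
      · intro k hk
        rw [Nat.div_div_eq_div_mul, ← pow_succ']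
        exact h (k + 1) (by omega)
    have := Nat.div_add_mod n p
    rw [pow_zero, Nat.div_one] at h0
    rw [h1, h0] at this
    simpa using this.symm

/-- Properties of the map `u : ℕ₀ → K` defined by the digit
construction: for `0 ≤ n < q`, writing `n = ∑_{k<c} a_k p^k` (`0 ≤ a_k < p`),
`u n = (∑_{k<c} a_k ε_k) π⁻¹`; for general `n`, writing `n = ∑_k b_k q^k`
(`0 ≤ b_k < q`), `u n = ∑_k π^{-k} u (b_k)`.  Then:
(a) `u n = 0 ↔ n = 0`, and for `k ≥ 1`, `‖u n‖ = q ^ k ↔ q^{k-1} ≤ n < q^k`;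
(b) `{u n} = {-u n}`; (c) for each `m`, `{u m + u n : n} = {u n : n}`.
Consequently `{u n : n ∈ ℕ₀}` is (the carrier of) an additive subgroup of `K⁺`. -/
theorem statement1 (C : LFPCBase) (ε : ℕ → C.K)
    (hε0 : ε 0 = 1)
    (hε_mem : ∀ k, k < C.c → ‖ε k‖ ≤ 1)
    -- the images of `ε 0, …, ε (c-1)` in the residue field `𝔇/𝔅 ≅ GF(q)` are
    -- linearly independent over `GF(p)` …
    (hε_indep : ∀ a : ℕ → ℕ, (∀ k, k < C.c → a k < C.p) →
        (‖∑ k ∈ Finset.range C.c, (a k : C.K) * ε k‖ < 1 ↔ ∀ k, k < C.c → a k = 0))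
    -- … and they span it
    (hε_span : ∀ x : C.K, ‖x‖ ≤ 1 → ∃ a : ℕ → ℕ, (∀ k, k < C.c → a k < C.p) ∧
        ‖x - ∑ k ∈ Finset.range C.c, (a k : C.K) * ε k‖ < 1)
    (u : ℕ → C.K)
    -- the digit definition of `u n` for `0 ≤ n < q`
    (hu_base : ∀ n, n < C.q →
        u n = (∑ k ∈ Finset.range C.c, ((n / C.p ^ k % C.p : ℕ) : C.K) * ε k) * C.π⁻¹)
    -- the digit definition of `u n` for `n ≥ q`, via base-`q` digits
    (hu_rec : ∀ n : ℕ, C.q ≤ n →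
        u n = ∑ k ∈ Finset.range (n + 1), C.π ^ (-(k : ℤ)) * u (n / C.q ^ k % C.q)) :
    -- (a)
    ((∀ n : ℕ, u n = 0 ↔ n = 0) ∧
      (∀ k : ℕ, 1 ≤ k → ∀ n : ℕ,
        ‖u n‖ = (C.q : ℝ) ^ k ↔ (C.q ^ (k - 1) ≤ n ∧ n < C.q ^ k))) ∧
    -- (b)
    (Set.range u = Set.range fun n => -u n) ∧
    -- (c)
    (∀ m : ℕ, (Set.range fun n => u m + u n) = Set.range u) ∧
    -- consequently, `{u n : n ∈ ℕ₀}` is a subgroup of `K⁺`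
    (∃ H : AddSubgroup C.K, (H : Set C.K) = Set.range u) := by
  have := C.charP
  have hp2 := C.hp.two_le
  have hq2 : 2 ≤ C.q := by
    rw [C.hq]; exact hp2.trans (Nat.le_self_pow C.hc.ne' _)
  have hqR : (1 : ℝ) < C.q := by exact_mod_cast hq2
  have hπi : ‖C.π⁻¹‖ = C.q := by rw [norm_inv, C.hπ, inv_inv]
  have : IsUltrametricDist C.K := IsUltrametricDist.isUltrametricDist_of_forall_norm_add_le_max_norm C.ultrametric
  have u0 : u 0 = 0 := by
    rw [hu_base 0 (by omega)]; simp
  -- the sum can be extended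
  have hsum : ∀ n N : ℕ, n + 1 ≤ N →
      u n = ∑ k ∈ Finset.range N, C.π ^ (-(k : ℤ)) * u (n / C.q ^ k % C.q) := by
    intro n N hN
    have hz : ∀ k : ℕ, n < C.q ^ k → C.π ^ (-(k : ℤ)) * u (n / C.q ^ k % C.q) = 0 := by
      intro k hk
      rw [Nat.div_eq_of_lt hk]; simp [u0]
    by_cases hn : n < C.q
    · rw [Finset.sum_eq_single_of_mem 0 (by simp; omega)]
      · simp [Nat.mod_eq_of_lt hn]
      · intro k _ hk
        exact hz k (hn.trans_le (Nat.le_self_pow hk _))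
    · rw [hu_rec n (by omega)]
      apply Finset.sum_subset
      · intro k; simp; omega
      · intro k _ hk
        apply hz
        simp at hk
        have := Nat.lt_pow_self (n := k) (a := C.q) (by omega)
        omega
  have hrec : ∀ n, u n = u (n % C.q) + C.π⁻¹ * u (n / C.q) := by
    intro n
    by_cases hn : n < C.q
    · rw [Nat.mod_eq_of_lt hn, Nat.div_eq_of_lt hn, u0]; simp
    · have h1 : n / C.q + 1 ≤ n := Nat.div_lt_self (by omega) (by omega)
      have hπ0 : C.π ≠ 0 := by
        intro h; have h2 := C.hπ; rw [h, norm_zero] at h2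
        have : (0 : ℝ) < (C.q : ℝ)⁻¹ := by positivity
        linarith
      rw [hsum n (n + 1) le_rfl, Finset.sum_range_succ', hsum (n / C.q) n h1, Finset.mul_sum,
        add_comm]
      congr 1
      · simp
      · apply Finset.sum_congr rfl
        intro k _
        rw [Nat.div_div_eq_div_mul, ← pow_succ', ← mul_assoc]
        congr 1
        rw [← zpow_neg_one, ← zpow_add₀ hπ0]
        congr 1
        push_cast; ring
  have hcomb : ∀ e f, e < C.q → u (e + C.q * f) = u e + C.π⁻¹ * u f := by
    intro e f he
    rw [hrec, Nat.add_mul_mod_self_left, Nat.mod_eq_of_lt he,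
      Nat.add_mul_div_left _ _ (by omega), Nat.div_eq_of_lt he, zero_add]
  have hsmall : ∀ n, n < C.q → n ≠ 0 → ‖u n‖ = C.q := by
    intro n hn hn0
    rw [hu_base n hn, norm_mul, hπi]
    suffices h : ‖∑ k ∈ Finset.range C.c, ((n / C.p ^ k % C.p : ℕ) : C.K) * ε k‖ = 1 by
      rw [h, one_mul]
    apply le_antisymm
    · apply IsUltrametricDist.norm_sum_le_of_forall_le_of_nonneg zero_le_one
      intro k hk
      rw [norm_mul]
      exact mul_le_one₀ (IsUltrametricDist.norm_natCast_le_one _ _) (norm_nonneg _)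
        (hε_mem k (by simpa using hk))
    · by_contra h
      push Not at h
      have := (hε_indep (fun k => n / C.p ^ k % C.p)
        (fun k _ => Nat.mod_lt _ (by omega))).1 h
      exact hn0 (all_digits_zero C.p C.c n (by rw [← C.hq]; exact hn) this)
  have hsmall' : ∀ n, n < C.q → ‖u n‖ ≤ C.q := by
    intro n hn
    by_cases h : n = 0
    · rw [h, u0, norm_zero]; positivity
    · exact (hsmall n hn h).le
  have hA : ∀ n, n ≠ 0 → ∃ k, C.q ^ k ≤ n ∧ n < C.q ^ (k + 1) ∧ ‖u n‖ = (C.q : ℝ) ^ (k + 1) := by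
    intro n
    induction n using Nat.strong_induction_on with
    | _ n ih =>
      intro hn
      by_cases hnq : n < C.q
      · exact ⟨0, by simp; omega, by simpa using hnq, by simpa using hsmall n hnq hn⟩
      · obtain ⟨k, h1, h2, h3⟩ := ih (n / C.q) (Nat.div_lt_self (by omega) (by omega))
          (Nat.div_pos (by omega) (by omega)).ne'
        refine ⟨k + 1, ?_, ?_, ?_⟩
        · rw [pow_succ]; exact (Nat.le_div_iff_mul_le (by omega)).1 h1
        · rw [pow_succ]; exact (Nat.div_lt_iff_lt_mul (by omega)).1 h2
        · have h4 : ‖C.π⁻¹ * u (n / C.q)‖ = (C.q : ℝ) ^ (k + 1 + 1) := by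
            rw [norm_mul, hπi, h3]; ring
          have h5 := hsmall' (n % C.q) (Nat.mod_lt _ (by omega))
          have h6 : (C.q : ℝ) < (C.q : ℝ) ^ (k + 1 + 1) := by
            simpa using pow_lt_pow_right₀ hqR (show 1 < k + 1 + 1 by omega)
          rw [hrec, IsUltrametricDist.norm_add_eq_max_of_norm_ne_norm (by rw [h4]; linarith), h4]
          exact max_eq_right (by linarith)
  have hadd0 : ∀ a b, a < C.q → b < C.q → ∃ e, e < C.q ∧ u a + u b = u e := by
    intro a b ha hb
    obtain ⟨e, he, hd⟩ := digits_exist C.p (by omega) C.c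
      (fun k => (a / C.p ^ k % C.p + b / C.p ^ k % C.p) % C.p)
      (fun k _ => Nat.mod_lt _ (by omega))
    rw [← C.hq] at he
    refine ⟨e, he, ?_⟩
    rw [hu_base a ha, hu_base b hb, hu_base e he, ← add_mul, ← Finset.sum_add_distrib]
    congr 1
    apply Finset.sum_congr rfl
    intro k hk
    rw [hd k (by simpa using hk), ← add_mul, ← Nat.cast_add]
    congr 1
    rw [CharP.cast_eq_iff_mod_eq C.K C.p, Nat.mod_mod]
  have hadd : ∀ m n, ∃ e, u e = u m + u n := by
    intro m
    induction m using Nat.strong_induction_on with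
    | _ m ih =>
      intro n
      by_cases hm : m = 0
      · exact ⟨n, by rw [hm, u0, zero_add]⟩
      · obtain ⟨f, hf⟩ := ih (m / C.q) (Nat.div_lt_self (by omega) (by omega)) (n / C.q)
        obtain ⟨e, he, he'⟩ := hadd0 (m % C.q) (n % C.q) (Nat.mod_lt _ (by omega))
          (Nat.mod_lt _ (by omega))
        refine ⟨e + C.q * f, ?_⟩
        rw [hcomb e f he, ← he', hf, hrec m, hrec n]
        ring
  have hmul : ∀ j n : ℕ, ∃ e, u e = (j : C.K) * u n := by
    intro j n
    induction j with
    | zero => exact ⟨0, by simp [u0]⟩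
    | succ j ih =>
      obtain ⟨e, he⟩ := ih
      obtain ⟨f, hf⟩ := hadd e n
      exact ⟨f, by rw [hf, he]; push_cast; ring⟩
  have hneg : ∀ n, ∃ e, u e = - u n := by
    intro n
    obtain ⟨e, he⟩ := hmul (C.p - 1) n
    refine ⟨e, ?_⟩
    rw [he, Nat.cast_sub (by omega), CharP.cast_eq_zero]
    simp
  refine ⟨⟨?_, ?_⟩, ?_, ?_, ?_⟩
  · intro n
    refine ⟨fun h => ?_, fun h => by rw [h, u0]⟩
    by_contra hn
    obtain ⟨k, _, _, h3⟩ := hA n hn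
    rw [h, norm_zero] at h3
    have : (0 : ℝ) < (C.q : ℝ) ^ (k + 1) := by positivity
    linarith
  · intro k hk n
    obtain ⟨k, rfl⟩ : ∃ j, k = j + 1 := ⟨k - 1, by omega⟩
    rw [Nat.add_sub_cancel]
    by_cases hn : n = 0
    · have h1 : (0 : ℝ) < (C.q : ℝ) ^ (k + 1) := by positivity
      have h2 : 0 < C.q ^ k := by positivity
      rw [hn, u0, norm_zero]
      constructor
      · intro h; linarith
      · intro h; omega
    · obtain ⟨j, h1, h2, h3⟩ := hA n hn
      rw [h3]
      constructor
      · intro h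
        have := pow_right_injective₀ (by linarith) hqR.ne' h
        have : j = k := by omega
        subst this
        exact ⟨h1, h2⟩
      · rintro ⟨h4, h5⟩
        have h6 := (Nat.pow_lt_pow_iff_right (a := C.q) (by omega)).1 (h1.trans_lt h5)
        have h7 := (Nat.pow_lt_pow_iff_right (a := C.q) (by omega)).1 (h4.trans_lt h2)
        have : j = k := by omega
        rw [this]
  · ext x
    constructor
    · rintro ⟨n, rfl⟩
      obtain ⟨e, he⟩ := hneg n
      exact ⟨e, by simp [he]⟩
    · rintro ⟨n, rfl⟩
      exact hneg n
  · intro m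
    ext x
    constructor
    · rintro ⟨n, rfl⟩
      exact hadd m n
    · rintro ⟨n, rfl⟩
      obtain ⟨e, he⟩ := hneg m
      obtain ⟨f, hf⟩ := hadd e n
      exact ⟨f, by simp [hf, he]⟩
  · refine ⟨{ carrier := Set.range u, add_mem' := ?_, zero_mem' := ⟨0, u0⟩, neg_mem' := ?_ }, rfl⟩
    · rintro _ _ ⟨m, rfl⟩ ⟨n, rfl⟩
      exact hadd m n
    · rintro _ ⟨n, rfl⟩
      exact hneg n
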